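/- arXiv:2507.19244 — 2 statements merged into one kernel-verified Lean document; each statement's English description precedes it below -/
import Mathlib

section
/- Let a < b, sigma > 0, and Psi, Phi be real numbers, and define, for real mu and s > 0, the cost V(mu, s) = (1/(2s)) * (Phi - 2*Psi*mu + mu^2) + log(∫_a^b exp(-(x-mu)^2/(2s)) dx). Then for every mu and s > 0, the partial derivative of V with respect to mu equals (1/s) * (m1(mu, s) - Psi) * (-1) in the sense that ∂V/∂mu = (1/s)*(mu - Psi) + (1/s)*( (∫_{a-mu}^{b-mu} x * exp(-x^2/(2s)) dx) / (∫_{a-mu}^{b-mu} exp(-x^2/(2s)) dx) ), which equals (1/s) * (m1(mu, s) - Psi), where m1(mu, s) = (∫_a^b x * exp(-(x-mu)^2/(2s)) dx)/(∫_a^b exp(-(x-mu)^2/(2s)) dx) is the mean of the Gaussian N(mu, s) truncated to [a,b]. -/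
open Real intervalIntegral

/-!
Substituting `x ↦ x - m` moves the dependence on `m` of `∫ x in a..b, f (x - m)` into the limits of
integration, so its derivative consists of boundary terms, which the fundamental theorem of
calculus turns into `-∫ f'`. The Gaussian weight satisfies `f' x = -(x / s) * f x`, so the
logarithmic derivative of its mass is `1 / s` times its mean over `[a - m, b - m]`, and translating
back adds `m` to this mean.
-/

/-- The mean over the interval from `a` to `b` of the measure with density `f`, where `f` need not
be normalized. For a Gaussian weight, it is the mean of the Gaussian truncated to `[a, b]`. Its
value is `0` when `f` has zero integral. -/
noncomputable def intervalMean (f : ℝ → ℝ) (a b : ℝ) : ℝ :=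
  (∫ x in a..b, x * f x) / ∫ x in a..b, f x

/-- The centred Gaussian weight of variance `s`, without its normalizing constant, which cancels
in means and only shifts the logarithm of an integral. -/
noncomputable def gaussianWeight (s x : ℝ) : ℝ :=
  exp (-x ^ 2 / (2 * s))

section Translation

variable {a b μ : ℝ}

theorem hasDerivAt_integral_comp_sub_right_of_continuous {E : Type*} [NormedAddCommGroup E]
    [NormedSpace ℝ E] [CompleteSpace E] {f : ℝ → E} (hf : Continuous f) :
    HasDerivAt (fun m => ∫ x in a..b, f (x - m)) (f (a - μ) - f (b - μ)) μ := by
  have primitive (c : ℝ) :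
      HasDerivAt (fun m => ∫ x in (0 : ℝ)..(c - m), f x) (-f (c - μ)) μ :=
    (hf.integral_hasStrictDerivAt 0 (c - μ)).hasDerivAt.comp_const_sub c μ
  have eq_sub_primitive (m : ℝ) : ∫ x in a..b, f (x - m) =
      (∫ x in (0 : ℝ)..(b - m), f x) - ∫ x in (0 : ℝ)..(a - m), f x := by
    rw [integral_comp_sub_right, integral_interval_sub_left (hf.intervalIntegrable _ _)
      (hf.intervalIntegrable _ _)]
  simp only [eq_sub_primitive]
  exact ((primitive b).sub (primitive a)).congr_deriv (by abel)

theorem hasDerivAt_integral_comp_sub_right {E : Type*} [NormedAddCommGroup E] [NormedSpace ℝ E]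
    [CompleteSpace E] {f f' : ℝ → E} (hf : ∀ x, HasDerivAt f (f' x) x) (hf' : Continuous f') :
    HasDerivAt (fun m => ∫ x in a..b, f (x - m)) (-∫ x in (a - μ)..(b - μ), f' x) μ := by
  have hcont : Continuous f := continuous_iff_continuousAt.2 fun x => (hf x).continuousAt
  refine (hasDerivAt_integral_comp_sub_right_of_continuous hcont).congr_deriv ?_
  rw [integral_eq_sub_of_hasDerivAt (fun x _ => hf x) (hf'.intervalIntegrable _ _), neg_sub]

theorem hasDerivAt_log_integral_comp_sub_right {f f' : ℝ → ℝ} (hf : ∀ x, HasDerivAt f (f' x) x)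
    (hf' : Continuous f') (h : ∫ x in (a - μ)..(b - μ), f x ≠ 0) :
    HasDerivAt (fun m => log (∫ x in a..b, f (x - m)))
      (-(∫ x in (a - μ)..(b - μ), f' x) / ∫ x in (a - μ)..(b - μ), f x) μ := by
  have mass_translate : ∫ x in a..b, f (x - μ) = ∫ x in (a - μ)..(b - μ), f x :=
    integral_comp_sub_right f μ
  rw [← mass_translate] at h ⊢
  exact (hasDerivAt_integral_comp_sub_right hf hf').log h

theorem intervalMean_comp_sub_right {f : ℝ → ℝ} (h : ∫ x in (a - μ)..(b - μ), f x ≠ 0) :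
    intervalMean (fun x => f (x - μ)) a b = intervalMean f (a - μ) (b - μ) + μ := by
  have hf : IntervalIntegrable f MeasureTheory.volume (a - μ) (b - μ) :=
    intervalIntegrable_of_integral_ne_zero h
  have moment_eq : ∫ x in a..b, x * f (x - μ) =
      (∫ x in (a - μ)..(b - μ), x * f x) + μ * ∫ x in (a - μ)..(b - μ), f x := calc
    ∫ x in a..b, x * f (x - μ)
    _ = ∫ x in a..b, (x - μ + μ) * f (x - μ) := by simp only [sub_add_cancel]
    _ = ∫ x in (a - μ)..(b - μ), (x + μ) * f x :=
      integral_comp_sub_right (fun x => (x + μ) * f x) μ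
    _ = (∫ x in (a - μ)..(b - μ), x * f x) + μ * ∫ x in (a - μ)..(b - μ), f x := by
      simp only [add_mul]
      rw [integral_add (hf.continuousOn_mul continuous_id'.continuousOn) (hf.const_mul μ),
        integral_const_mul]
  rw [intervalMean, intervalMean, moment_eq, integral_comp_sub_right, add_div,
    mul_div_cancel_right₀ _ h]

end Translation

section Gaussian

variable {a b : ℝ} (s : ℝ)

theorem continuous_gaussianWeight : Continuous (gaussianWeight s) := by
  unfold gaussianWeight
  fun_prop

theorem hasDerivAt_gaussianWeight (x : ℝ) :
    HasDerivAt (gaussianWeight s) (-(1 / s) * (x * gaussianWeight s x)) x := by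
  have exponent : HasDerivAt (fun x => -x ^ 2 / (2 * s)) (-(1 / s) * x) x :=
    ((hasDerivAt_pow 2 x).neg.div_const (2 * s)).congr_deriv (by field)
  exact exponent.exp.congr_deriv (by rw [gaussianWeight]; ring)

theorem integral_gaussianWeight_pos (hab : a < b) : 0 < ∫ x in a..b, gaussianWeight s x :=
  intervalIntegral_pos_of_pos ((continuous_gaussianWeight s).intervalIntegrable _ _)
    (fun _ => exp_pos _) hab

theorem hasDerivAt_log_integral_gaussianWeight_sub (hab : a < b) (μ : ℝ) :
    HasDerivAt (fun m => log (∫ x in a..b, gaussianWeight s (x - m)))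
      (1 / s * intervalMean (gaussianWeight s) (a - μ) (b - μ)) μ := by
  have hcont : Continuous fun x => -(1 / s) * (x * gaussianWeight s x) :=
    (continuous_id.mul (continuous_gaussianWeight s)).const_mul _
  have mass_ne_zero : ∫ x in (a - μ)..(b - μ), gaussianWeight s x ≠ 0 :=
    (integral_gaussianWeight_pos s (sub_lt_sub_right hab μ)).ne'
  refine (hasDerivAt_log_integral_comp_sub_right (hasDerivAt_gaussianWeight s) hcont
    mass_ne_zero).congr_deriv ?_
  rw [integral_const_mul, intervalMean, neg_mul, neg_neg, mul_div_assoc]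

end Gaussian

theorem hasDerivAt_quadratic_cost (Ψ Φ s μ : ℝ) :
    HasDerivAt (fun m => 1 / (2 * s) * (Φ - 2 * Ψ * m + m ^ 2)) (1 / s * (μ - Ψ)) μ := by
  have inner : HasDerivAt (fun m => Φ - 2 * Ψ * m + m ^ 2) (2 * (μ - Ψ)) μ :=
    ((((hasDerivAt_id μ).const_mul (2 * Ψ)).const_sub Φ).add (hasDerivAt_pow 2 μ)).congr_deriv
      (by ring)
  exact (inner.const_mul (1 / (2 * s))).congr_deriv (by field)

/-- For the EM cost `V(μ, s) = (1/(2s))(Φ - 2Ψμ + μ²) + log ∫_a^b exp(-(x-μ)²/(2s)) dx`,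
its partial derivative with respect to `μ` equals
`(1/s)(μ - Ψ) + (1/s) (∫_{a-μ}^{b-μ} x exp(-x²/(2s)) dx)/(∫_{a-μ}^{b-μ} exp(-x²/(2s)) dx)`,
which equals `(1/s)(m₁(μ, s) - Ψ)`, where `m₁(μ, s)` is the mean of the Gaussian
`N(μ, s)` truncated to `[a, b]`. -/
theorem em_cost_deriv_mu (a b Ψ Φ : ℝ) (hab : a < b) (μ s : ℝ) (hs : 0 < s) :
    HasDerivAt
      (fun m : ℝ =>
        (1 / (2 * s)) * (Φ - 2 * Ψ * m + m ^ 2) +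
          Real.log (∫ x in a..b, Real.exp (-(x - m) ^ 2 / (2 * s))))
      ((1 / s) * (μ - Ψ) +
        (1 / s) *
          ((∫ x in (a - μ)..(b - μ), x * Real.exp (-x ^ 2 / (2 * s))) /
            (∫ x in (a - μ)..(b - μ), Real.exp (-x ^ 2 / (2 * s))))) μ ∧
    (1 / s) * (μ - Ψ) +
        (1 / s) *
          ((∫ x in (a - μ)..(b - μ), x * Real.exp (-x ^ 2 / (2 * s))) /
            (∫ x in (a - μ)..(b - μ), Real.exp (-x ^ 2 / (2 * s)))) =
      (1 / s) *
        ((∫ x in a..b, x * Real.exp (-(x - μ) ^ 2 / (2 * s))) /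
            (∫ x in a..b, Real.exp (-(x - μ) ^ 2 / (2 * s))) - Ψ) := by
  have mass_ne_zero : ∫ x in (a - μ)..(b - μ), gaussianWeight s x ≠ 0 :=
    (integral_gaussianWeight_pos s (sub_lt_sub_right hab μ)).ne'
  have mean_translate : intervalMean (fun x => gaussianWeight s (x - μ)) a b =
      intervalMean (gaussianWeight s) (a - μ) (b - μ) + μ :=
    intervalMean_comp_sub_right mass_ne_zero
  refine ⟨(hasDerivAt_quadratic_cost Ψ Φ s μ).add
    (hasDerivAt_log_integral_gaussianWeight_sub s hab μ), ?_⟩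
  change 1 / s * (μ - Ψ) + 1 / s * intervalMean (gaussianWeight s) (a - μ) (b - μ) =
    1 / s * (intervalMean (fun x => gaussianWeight s (x - μ)) a b - Ψ)
  rw [mean_translate]
  ring
end

section
/- Let a < b and Psi, Phi be real numbers, and define, for real mu and s > 0, the cost V(mu, s) = (1/(2s)) * (Phi - 2*Psi*mu + mu^2) + log(∫_a^b exp(-(x-mu)^2/(2s)) dx). Then a point (mu, s) with s > 0 satisfies ∂V/∂mu = 0 and ∂V/∂s = 0 if and only if the first and second moments of the Gaussian N(mu, s) truncated to [a,b] match the data moments, that is, (∫_a^b x * exp(-(x-mu)^2/(2s)) dx)/(∫_a^b exp(-(x-mu)^2/(2s)) dx) = Psi and (∫_a^b x^2 * exp(-(x-mu)^2/(2s)) dx)/(∫_a^b exp(-(x-mu)^2/(2s)) dx) = Phi. -/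
/-!
Write `Z = ∫ exp f_θ ∂ν` for a family of exponents `f_θ`. The derivative of `log Z` in `θ` is the
mean of `∂f_θ/∂θ` under the probability measure with density `exp f_θ / Z`. For the Gaussian
exponent `-(x - m)² / (2s)` this measure is the truncated Gaussian, and writing `E` for its
expectation one finds
`∂V/∂m = (E[x] - Ψ) / s` and `∂V/∂s = ((E[x²] - Φ) - 2m (E[x] - Ψ)) / (2s²)`,
a triangular system in the two moment defects. Differentiation under the integral sign is
justified for every finite measure, since the differentiated integrands are bounded.
-/

open Real intervalIntegral
open MeasureTheory Filter Topology Set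

section LogPartition

variable {α : Type*} [MeasurableSpace α] {ν : Measure α}

theorem integral_tilted_eq_div (f g : α → ℝ) :
    ∫ x, g x ∂(ν.tilted f) = (∫ x, g x * exp (f x) ∂ν) / ∫ x, exp (f x) ∂ν := by
  rw [integral_tilted, ← MeasureTheory.integral_div]
  congr with x
  rw [smul_eq_mul]
  ring

theorem hasDerivAt_log_integral_exp [NeZero ν] {f f' : ℝ → α → ℝ} {bound : α → ℝ} {θ : ℝ}
    {u : Set ℝ} (hu : u ∈ 𝓝 θ) (hf_meas : ∀ᶠ t in 𝓝 θ, AEMeasurable (f t) ν)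
    (hf_int : Integrable (fun x => exp (f θ x)) ν) (hf'_meas : AEMeasurable (f' θ) ν)
    (h_bound : ∀ᵐ x ∂ν, ∀ t ∈ u, |f' t x * exp (f t x)| ≤ bound x) (bound_int : Integrable bound ν)
    (h_deriv : ∀ᵐ x ∂ν, ∀ t ∈ u, HasDerivAt (f · x) (f' t x) t) :
    HasDerivAt (fun t => log (∫ x, exp (f t x) ∂ν)) (∫ x, f' θ x ∂(ν.tilted (f θ))) θ := by
  rw [integral_tilted_eq_div]
  refine HasDerivAt.log ?_ (integral_exp_pos hf_int).ne'
  refine (hasDerivAt_integral_of_dominated_loc_of_deriv_le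
    (F' := fun t x => f' t x * exp (f t x)) hu ?_ hf_int ?_ h_bound bound_int ?_).2
  · exact hf_meas.mono fun t ht => ht.exp.aestronglyMeasurable
  · exact (hf'_meas.mul hf_meas.self_of_nhds.exp).aestronglyMeasurable
  · filter_upwards [h_deriv] with x hx t ht
    simpa only [mul_comm] using (hx t ht).exp

end LogPartition

/-- The exponent of the unnormalized density of the Gaussian with mean `m` and variance `s`. -/
noncomputable def gaussianExponent (m s x : ℝ) : ℝ := -(x - m) ^ 2 / (2 * s)

/-- The Gaussian with mean `m` and variance `s` relative to the reference measure `ν`, normalized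
to a probability measure; truncation to a set `A` is the case `ν = volume.restrict A`. -/
noncomputable def gaussianTilted (ν : Measure ℝ) (m s : ℝ) : Measure ℝ :=
  ν.tilted (gaussianExponent m s)

/-- The EM cost `V(m, s)` with data moments `Ψ`, `Φ`, where the Gaussian has density relative to
the reference measure `ν`. -/
noncomputable def emCost (ν : Measure ℝ) (Ψ Φ m s : ℝ) : ℝ :=
  1 / (2 * s) * (Φ - 2 * Ψ * m + m ^ 2) + log (∫ x, exp (gaussianExponent m s x) ∂ν)

theorem measurable_gaussianExponent (m s : ℝ) : Measurable (gaussianExponent m s) := by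
  unfold gaussianExponent
  fun_prop

theorem hasDerivAt_gaussianExponent_mean (m s x : ℝ) :
    HasDerivAt (fun t => gaussianExponent t s x) ((x - m) / s) m := by
  refine ((((hasDerivAt_id' m).const_sub x).fun_pow 2).fun_neg.div_const (2 * s)).congr_deriv ?_
  push_cast
  ring

theorem hasDerivAt_gaussianExponent_variance (m x : ℝ) {s : ℝ} (hs : s ≠ 0) :
    HasDerivAt (fun t => gaussianExponent m t x) ((x - m) ^ 2 / (2 * s ^ 2)) s := by
  refine ((hasDerivAt_const s (-(x - m) ^ 2)).fun_div ((hasDerivAt_id' s).const_mul 2)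
    (mul_ne_zero two_ne_zero hs)).congr_deriv ?_
  field_simp
  ring

theorem exp_gaussianExponent_le_one (m x : ℝ) {s : ℝ} (hs : 0 < s) :
    exp (gaussianExponent m s x) ≤ 1 :=
  exp_le_one_iff.2 <| div_nonpos_of_nonpos_of_nonneg (neg_nonpos.2 (sq_nonneg _)) (by positivity)

theorem sq_mul_exp_gaussianExponent_le (m x : ℝ) {s : ℝ} (hs : 0 < s) :
    (x - m) ^ 2 * exp (gaussianExponent m s x) ≤ 2 * s := by
  set y := (x - m) ^ 2 / (2 * s) with hy
  calc (x - m) ^ 2 * exp (gaussianExponent m s x)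
      = 2 * s * (y * exp (-y)) := by rw [gaussianExponent, neg_div, hy]; field_simp
    _ ≤ 2 * s * 1 := by
      gcongr
      exact (mul_exp_neg_le_exp_neg_one y).trans (exp_le_one_iff.2 (by norm_num))
    _ = 2 * s := mul_one _

theorem abs_mul_exp_gaussianExponent_le (m x : ℝ) {s : ℝ} (hs : 0 < s) :
    |x - m| * exp (gaussianExponent m s x) ≤ 1 + 2 * s := by
  have habs : |x - m| ≤ 1 + (x - m) ^ 2 := by
    nlinarith [sq_abs (x - m), sq_nonneg (|x - m| - 1), abs_nonneg (x - m)]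
  calc |x - m| * exp (gaussianExponent m s x)
      ≤ (1 + (x - m) ^ 2) * exp (gaussianExponent m s x) := by gcongr
    _ = exp (gaussianExponent m s x) + (x - m) ^ 2 * exp (gaussianExponent m s x) := by ring
    _ ≤ 1 + 2 * s :=
      add_le_add (exp_gaussianExponent_le_one m x hs) (sq_mul_exp_gaussianExponent_le m x hs)

section FiniteMeasure

variable (ν : Measure ℝ) [IsFiniteMeasure ν] (Ψ Φ m : ℝ) {s : ℝ}

theorem integrable_exp_gaussianExponent (hs : 0 < s) :
    Integrable (fun x => exp (gaussianExponent m s x)) ν := by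
  refine .of_bound (measurable_gaussianExponent m s).exp.aestronglyMeasurable 1 (.of_forall ?_)
  intro x
  simpa only [norm_eq_abs, abs_exp] using exp_gaussianExponent_le_one m x hs

theorem memLp_two_sub_gaussianTilted (hs : 0 < s) :
    MemLp (fun x => x - m) 2 (gaussianTilted ν m s) := by
  rw [memLp_two_iff_integrable_sq (by fun_prop), gaussianTilted,
    integrable_tilted_iff (integrable_exp_gaussianExponent ν m hs)]
  have hmeas : Measurable fun x => exp (gaussianExponent m s x) • (x - m) ^ 2 :=
    (measurable_gaussianExponent m s).exp.smul (by fun_prop)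
  refine .of_bound hmeas.aestronglyMeasurable (2 * s) (.of_forall fun x => ?_)
  rw [smul_eq_mul, mul_comm, norm_of_nonneg (by positivity)]
  exact sq_mul_exp_gaussianExponent_le m x hs

variable [NeZero ν]

theorem isProbabilityMeasure_gaussianTilted (hs : 0 < s) :
    IsProbabilityMeasure (gaussianTilted ν m s) :=
  isProbabilityMeasure_tilted (integrable_exp_gaussianExponent ν m hs)

theorem memLp_two_id_gaussianTilted (hs : 0 < s) :
    MemLp (fun x => x) 2 (gaussianTilted ν m s) := by
  have := isProbabilityMeasure_gaussianTilted ν m hs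
  simpa only [Pi.add_def, sub_add_cancel] using
    (memLp_two_sub_gaussianTilted ν m hs).add (memLp_const m)

theorem integral_sub_gaussianTilted (hs : 0 < s) :
    ∫ x, (x - m) ∂(gaussianTilted ν m s) = ∫ x, x ∂(gaussianTilted ν m s) - m := by
  have := isProbabilityMeasure_gaussianTilted ν m hs
  have hint := (memLp_two_id_gaussianTilted ν m hs).integrable one_le_two
  rw [MeasureTheory.integral_sub hint (integrable_const m), MeasureTheory.integral_const,
    probReal_univ, one_smul]

theorem integral_sub_sq_gaussianTilted (hs : 0 < s) :
    ∫ x, (x - m) ^ 2 ∂(gaussianTilted ν m s) =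
      ∫ x, x ^ 2 ∂(gaussianTilted ν m s) - 2 * m * ∫ x, x ∂(gaussianTilted ν m s) + m ^ 2 := by
  have := isProbabilityMeasure_gaussianTilted ν m hs
  have hLp := memLp_two_id_gaussianTilted ν m hs
  have hint := (hLp.integrable one_le_two).const_mul (2 * m)
  calc ∫ x, (x - m) ^ 2 ∂(gaussianTilted ν m s)
      = ∫ x, x ^ 2 - 2 * m * x + m ^ 2 ∂(gaussianTilted ν m s) := by
        congr with x
        ring
    _ = _ := by
        have hint_sub : Integrable (fun x => x ^ 2 - 2 * m * x) (gaussianTilted ν m s) :=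
          hLp.integrable_sq.sub hint
        rw [MeasureTheory.integral_add hint_sub (integrable_const _),
          MeasureTheory.integral_sub hLp.integrable_sq hint, MeasureTheory.integral_const_mul,
          MeasureTheory.integral_const, probReal_univ, one_smul]

theorem hasDerivAt_log_integral_exp_gaussianExponent_mean (hs : 0 < s) :
    HasDerivAt (fun t => log (∫ x, exp (gaussianExponent t s x) ∂ν))
      (∫ x, (x - m) / s ∂(gaussianTilted ν m s)) m := by
  refine hasDerivAt_log_integral_exp (f := fun t => gaussianExponent t s)
    (f' := fun t x => (x - t) / s) (bound := fun _ => (1 + 2 * s) / s) univ_mem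
    (.of_forall fun t => (measurable_gaussianExponent t s).aemeasurable)
    (integrable_exp_gaussianExponent ν m hs) (by fun_prop) (.of_forall fun x t _ => ?_)
    (integrable_const _) (.of_forall fun x t _ => hasDerivAt_gaussianExponent_mean t s x)
  rw [abs_mul, abs_div, abs_exp, abs_of_pos hs, div_mul_eq_mul_div]
  gcongr
  exact abs_mul_exp_gaussianExponent_le t x hs

theorem hasDerivAt_log_integral_exp_gaussianExponent_variance (hs : 0 < s) :
    HasDerivAt (fun t => log (∫ x, exp (gaussianExponent m t x) ∂ν))
      (∫ x, (x - m) ^ 2 / (2 * s ^ 2) ∂(gaussianTilted ν m s)) s := by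
  refine hasDerivAt_log_integral_exp (f := gaussianExponent m)
    (f' := fun t x => (x - m) ^ 2 / (2 * t ^ 2)) (bound := fun _ => 1 / (s / 2))
    (Ioi_mem_nhds (half_lt_self hs))
    (.of_forall fun t => (measurable_gaussianExponent m t).aemeasurable)
    (integrable_exp_gaussianExponent ν m hs) (by fun_prop) (.of_forall fun x t ht => ?_)
    (integrable_const _) (.of_forall fun x t ht =>
      hasDerivAt_gaussianExponent_variance m x ((half_pos hs).trans ht).ne')
  have ht_pos : 0 < t := (half_pos hs).trans ht
  calc |(x - m) ^ 2 / (2 * t ^ 2) * exp (gaussianExponent m t x)|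
      = (x - m) ^ 2 * exp (gaussianExponent m t x) / (2 * t ^ 2) := by
        rw [abs_of_nonneg (by positivity), div_mul_eq_mul_div]
    _ ≤ 2 * t / (2 * t ^ 2) :=
        div_le_div_of_nonneg_right (sq_mul_exp_gaussianExponent_le m x ht_pos) (by positivity)
    _ = 1 / t := by field_simp
    _ ≤ 1 / (s / 2) := one_div_le_one_div_of_le (half_pos hs) (mem_Ioi.1 ht).le

theorem hasDerivAt_emCost_mean (hs : 0 < s) :
    HasDerivAt (fun t => emCost ν Ψ Φ t s) ((∫ x, x ∂(gaussianTilted ν m s) - Ψ) / s) m := by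
  have hquad : HasDerivAt (fun t => 1 / (2 * s) * (Φ - 2 * Ψ * t + t ^ 2)) ((m - Ψ) / s) m := by
    refine (((((hasDerivAt_id' m).const_mul (2 * Ψ)).const_sub Φ).fun_add
      ((hasDerivAt_id' m).fun_pow 2)).const_mul (1 / (2 * s))).congr_deriv ?_
    push_cast
    ring
  refine (hquad.fun_add
    (hasDerivAt_log_integral_exp_gaussianExponent_mean ν m hs)).congr_deriv ?_
  rw [MeasureTheory.integral_div, integral_sub_gaussianTilted ν m hs]
  ring

theorem hasDerivAt_emCost_variance (hs : 0 < s) :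
    HasDerivAt (fun t => emCost ν Ψ Φ m t)
      ((∫ x, x ^ 2 ∂(gaussianTilted ν m s) - Φ -
        2 * m * (∫ x, x ∂(gaussianTilted ν m s) - Ψ)) / (2 * s ^ 2)) s := by
  have hquad : HasDerivAt (fun t => 1 / (2 * t) * (Φ - 2 * Ψ * m + m ^ 2))
      (-(Φ - 2 * Ψ * m + m ^ 2) / (2 * s ^ 2)) s := by
    refine (((hasDerivAt_const s (1 : ℝ)).fun_div ((hasDerivAt_id' s).const_mul 2)
      (by positivity)).mul_const _).congr_deriv ?_
    field_simp
    ring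
  refine (hquad.fun_add
    (hasDerivAt_log_integral_exp_gaussianExponent_variance ν m hs)).congr_deriv ?_
  rw [MeasureTheory.integral_div, integral_sub_sq_gaussianTilted ν m hs]
  ring

theorem em_cost_stationary_iff_moment_matching_general (hs : 0 < s) :
    (deriv (fun t => emCost ν Ψ Φ t s) m = 0 ∧ deriv (fun t => emCost ν Ψ Φ m t) s = 0) ↔
      (∫ x, x ∂(gaussianTilted ν m s) = Ψ ∧ ∫ x, x ^ 2 ∂(gaussianTilted ν m s) = Φ) := by
  have hs_sq : 2 * s ^ 2 ≠ 0 := by positivity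
  rw [(hasDerivAt_emCost_mean ν Ψ Φ m hs).deriv, (hasDerivAt_emCost_variance ν Ψ Φ m hs).deriv,
    div_eq_zero_iff, div_eq_zero_iff, or_iff_left hs.ne', or_iff_left hs_sq, sub_eq_zero]
  refine and_congr_right fun hmean => ?_
  rw [hmean, sub_self, mul_zero, sub_zero, sub_eq_zero]

end FiniteMeasure

/-- For the EM cost `V(μ, s) = (1/(2s))(Φ - 2Ψμ + μ²) + log ∫_a^b exp(-(x-μ)²/(2s)) dx`,
a point `(μ, s)` with `s > 0` is a stationary point (both partial derivatives vanish)
if and only if the first and second moments of the Gaussian `N(μ, s)` truncated to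
`[a, b]` match the data moments `Ψ` and `Φ`. -/
theorem em_cost_stationary_iff_moment_matching (a b Ψ Φ : ℝ) (hab : a < b)
    (μ s : ℝ) (hs : 0 < s) :
    (deriv (fun m : ℝ =>
        (1 / (2 * s)) * (Φ - 2 * Ψ * m + m ^ 2) +
          Real.log (∫ x in a..b, Real.exp (-(x - m) ^ 2 / (2 * s)))) μ = 0 ∧
      deriv (fun s' : ℝ =>
        (1 / (2 * s')) * (Φ - 2 * Ψ * μ + μ ^ 2) +
          Real.log (∫ x in a..b, Real.exp (-(x - μ) ^ 2 / (2 * s')))) s = 0) ↔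
    ((∫ x in a..b, x * Real.exp (-(x - μ) ^ 2 / (2 * s))) /
        (∫ x in a..b, Real.exp (-(x - μ) ^ 2 / (2 * s))) = Ψ ∧
      (∫ x in a..b, x ^ 2 * Real.exp (-(x - μ) ^ 2 / (2 * s))) /
        (∫ x in a..b, Real.exp (-(x - μ) ^ 2 / (2 * s))) = Φ) := by
  have : NeZero (volume (Ioc a b)) := ⟨by simp [hab]⟩
  simpa only [emCost, gaussianTilted, integral_tilted_eq_div, gaussianExponent,
    integral_of_le hab.le] using
    em_cost_stationary_iff_moment_matching_general (volume.restrict (Ioc a b)) Ψ Φ μ hs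
end
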